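/- Fix n > 0. For every ε > 0 there exist L ∈ ℕ, C > 0, and δ > 0 such that for all graphons U and W: if ‖h_U − h_W‖₂ ≤ δ for every L'-layer MPNN model φ and every Lipschitz ψ : ℝ^{d_{L'}} → ℝⁿ with L' ≤ L and C_{(φ,ψ)} ≤ C, then δ_P(U,W) ≤ ε. -/

import Mathlib

open MeasureTheory Set

noncomputable section

/-- Borel measures of total mass at most one on `X`. -/
abbrev SubProb (X : Type) [MeasurableSpace X] : Type :=
  {μ : Measure X // μ Set.univ ≤ 1}

/-- The weak topology on `SubProb X`: the coarsest topology making all maps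
`μ ↦ ∫ f dμ` for bounded continuous `f` continuous. -/
def subProbWeakTop (X : Type) [MeasurableSpace X] [TopologicalSpace X] :
    TopologicalSpace (SubProb X) :=
  ⨅ f : BoundedContinuousFunction X ℝ,
    TopologicalSpace.induced (fun μ => ∫ x, f x ∂μ.val) inferInstance

/-- Iterated degree measure spaces with their (weak) topologies:
`M 0` is a one-point space and `M (h+1)` is the space of Borel measures of total
mass at most one on `M h` with the weak topology. -/
def IDM : ℕ → Σ X : Type, TopologicalSpace X
  | 0 => ⟨Unit, inferInstance⟩
  | (h+1) =>
      let p := IDM h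
      ⟨@SubProb p.1 (@borel p.1 p.2), @subProbWeakTop p.1 (@borel p.1 p.2) p.2⟩

/-- The space of iterated degree measures of depth `h`. -/
def M (h : ℕ) : Type := (IDM h).1

instance (h : ℕ) : TopologicalSpace (M h) := (IDM h).2
instance (h : ℕ) : MeasurableSpace (M h) := borel (M h)
instance (h : ℕ) : BorelSpace (M h) := ⟨rfl⟩

def toSub {h : ℕ} (α : M (h+1)) : SubProb (M h) := α
def ofSub {h : ℕ} (μ : SubProb (M h)) : M (h+1) := μ
/-- The underlying measure of an iterated degree measure. -/
def toMeas {h : ℕ} (α : M (h+1)) : Measure (M h) := (toSub α).1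

/-- The open `ε`-thickening `A^ε` of a set w.r.t. a distance function. -/
def thicken {X : Type _} (d : X → X → ℝ) (ε : ℝ) (A : Set X) : Set X :=
  {y | ∃ x ∈ A, d x y < ε}

/-- The Prokhorov distance of two measures w.r.t. a distance function `d`. -/
def prokhorovDist {X : Type _} [MeasurableSpace X] (d : X → X → ℝ)
    (μ ν : Measure X) : ℝ :=
  sInf {ε : ℝ | 0 < ε ∧ ∀ A : Set X, MeasurableSet A →
    μ A ≤ ν (thicken d ε A) + ENNReal.ofReal ε ∧
    ν A ≤ μ (thicken d ε A) + ENNReal.ofReal ε}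

/-- The iterated Prokhorov metrics `P^h` on the spaces `M h`. -/
def Pdist : (h : ℕ) → M h → M h → ℝ
  | 0, _, _ => 0
  | (h+1), α, β => prokhorovDist (Pdist h) (toMeas α) (toMeas β)

/-- Borel probability measures on `X`. -/
abbrev ProbM (X : Type) [MeasurableSpace X] : Type :=
  {μ : Measure X // IsProbabilityMeasure μ}

/-- The weak topology on Borel probability measures. -/
def probWeakTop (X : Type) [MeasurableSpace X] [TopologicalSpace X] :
    TopologicalSpace (ProbM X) :=
  ⨅ f : BoundedContinuousFunction X ℝ,
    TopologicalSpace.induced (fun μ => ∫ x, f x ∂μ.val) inferInstance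

/-- The projections `p_{h+1,h} : M (h+1) → M h`, given by pushforward. -/
def projM : (h : ℕ) → M (h+1) → M h
  | 0, _ => ()
  | (h+1), α => ofSub ⟨(toMeas α).map (projM h), by
      by_cases hf : AEMeasurable (projM h) (toMeas α)
      · rw [Measure.map_apply_of_aemeasurable hf MeasurableSet.univ, Set.preimage_univ]
        exact (toSub α).2
      · rw [Measure.map_of_not_aemeasurable hf]
        simp⟩

/-- The inverse limit `M_∞` of the spaces `M h` along the projections,
with the subspace topology of the product topology. -/
abbrev Minf : Type := {α : (h : ℕ) → M h // ∀ h, projM h (α (h+1)) = α h}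

instance : MeasurableSpace Minf := borel Minf
instance : BorelSpace Minf := ⟨rfl⟩
/-- An MPNN model: dimensions `d t`, an initial feature `φ₀ ∈ ℝ^{d 0}`, and
continuous update functions `φ t : ℝ^{d t} → ℝ^{d (t+1)}`. An `L`-layer model uses
the layers `φ 0, …, φ (L-1)`. -/
structure MPNNModel where
  d : ℕ → ℕ
  φ₀ : EuclideanSpace ℝ (Fin (d 0))
  φ : (t : ℕ) → EuclideanSpace ℝ (Fin (d t)) → EuclideanSpace ℝ (Fin (d (t+1)))
  cont : ∀ t, Continuous (φ t)

/-- MPNN features on iterated degree measures: `h^{(0)}_α = φ₀` and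
`h^{(t+1)}_α = φ_t (∫ h^{(t)}_β dα(β))`. -/
def idmFeat (m : MPNNModel) : (t : ℕ) → M t → EuclideanSpace ℝ (Fin (m.d t))
  | 0, _ => m.φ₀
  | (t+1), α => m.φ t (∫ β, idmFeat m t β ∂(toMeas α))

/-- A graphon: a symmetric measurable kernel `[0,1]² → [0,1]` (here defined on all
of `ℝ²`, with `[0,1]` carrying the Lebesgue measure). -/
structure Graphon where
  W : ℝ → ℝ → ℝ
  symm : ∀ x y, W x y = W y x
  mem : ∀ x y, W x y ∈ Set.Icc (0:ℝ) 1
  meas : Measurable (Function.uncurry W)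

/-- MPNN point features on a graphon kernel. -/
def graphonFeat (m : MPNNModel) (W : ℝ → ℝ → ℝ) :
    (t : ℕ) → ℝ → EuclideanSpace ℝ (Fin (m.d t))
  | 0, _ => m.φ₀
  | (t+1), x => m.φ t (∫ y in Set.Icc (0:ℝ) 1, W x y • graphonFeat m W t y)

/-- The graphon 1-WL maps `i_{W,h} : [0,1] → M h`: `i_{W,h+1}(x)` is the pushforward
along `i_{W,h}` of the measure on `[0,1]` with density `W(x,·)`. -/
def wlMap (W : Graphon) : (h : ℕ) → ℝ → M h
  | 0, _ => ()
  | (h+1), x => ofSub ⟨Measure.map (wlMap W h)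
      ((volume.restrict (Set.Icc (0:ℝ) 1)).withDensity fun y =>
        ENNReal.ofReal (W.W x y)), by
      by_cases hf : AEMeasurable (wlMap W h)
          ((volume.restrict (Set.Icc (0:ℝ) 1)).withDensity fun y =>
            ENNReal.ofReal (W.W x y))
      · rw [Measure.map_apply_of_aemeasurable hf MeasurableSet.univ, Set.preimage_univ,
          withDensity_apply _ MeasurableSet.univ, Measure.restrict_univ]
        calc ∫⁻ y, ENNReal.ofReal (W.W x y) ∂(volume.restrict (Set.Icc (0:ℝ) 1))
            ≤ ∫⁻ _, 1 ∂(volume.restrict (Set.Icc (0:ℝ) 1)) :=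
              lintegral_mono fun y => ENNReal.ofReal_le_one.mpr (W.mem x y).2
          _ ≤ 1 := by simp [Real.volume_Icc]
      · rw [Measure.map_of_not_aemeasurable hf]
        simp⟩


/-- `d_P(α,β) = sup_h (1/h) · P^h(α_h, β_h)` on the inverse limit. -/
def dPinf (α β : Minf) : ℝ := ⨆ h : ℕ, ((h : ℝ))⁻¹ * Pdist h (α.1 h) (β.1 h)

/-- The all-zero iterated degree measures. -/
def zeroM : (h : ℕ) → M h
  | 0 => ()
  | (_+1) => ofSub ⟨0, by simp⟩

/-- The consistent sequence of all-zero iterated degree measures. -/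
def zeroSeq : Minf :=
  ⟨fun h => zeroM h, by
    intro h
    cases h with
    | zero => rfl
    | succ h => exact Subtype.ext (Measure.map_zero _)⟩

open Classical in
/-- The graphon 1-WL map `i_W : [0,1] → M` into the inverse limit. -/
def iWinf (W : Graphon) (x : ℝ) : Minf :=
  if h : ∀ h', projM h' (wlMap W (h'+1) x) = wlMap W h' x then
    ⟨fun h' => wlMap W h' x, h⟩
  else zeroSeq

/-- The distribution of iterated degree measures `ν_W ∈ P(M)` of a graphon. -/
def nuW (W : Graphon) : Measure Minf :=
  Measure.map (iWinf W) (volume.restrict (Set.Icc (0:ℝ) 1))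

/-- The Prokhorov distance of two graphons: `δ_P(U,W) = δP^∞(ν_U, ν_W)`. -/
def deltaP (U W : Graphon) : ℝ := prokhorovDist dPinf (nuW U) (nuW W)

/-- The set `{∫ h^{(t)}_β dα : α ∈ M (t+1)}` of attainable aggregated inputs of the
layer function `φ t`. -/
def aggSet (m : MPNNModel) (t : ℕ) : Set (EuclideanSpace ℝ (Fin (m.d t))) :=
  {z | ∃ α : M (t+1), z = ∫ β, idmFeat m t β ∂(toMeas α)}

/-- The set `{∫ h^{(L)}_β dν : ν ∈ P(M L)}` of attainable aggregated inputs of the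
readout function. -/
def probAgg (m : MPNNModel) (L : ℕ) : Set (EuclideanSpace ℝ (Fin (m.d L))) :=
  {z | ∃ ν : ProbM (M L), z = ∫ β, idmFeat m L β ∂ν.1}

/-- The Lipschitz constant of `f` on the set `s`. -/
def lipConstOn {E F : Type _} [PseudoMetricSpace E] [PseudoMetricSpace F]
    (f : E → F) (s : Set E) : ℝ :=
  sInf {K : ℝ | 0 ≤ K ∧ ∀ x ∈ s, ∀ y ∈ s, dist (f x) (f y) ≤ K * dist x y}

/-- `‖h^{(t)}‖_∞`, the supremum of the norms of the `t`-th layer MPNN features. -/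
def supNorm (m : MPNNModel) (t : ℕ) : ℝ := ⨆ α : M t, ‖idmFeat m t α‖

/-- The Lipschitz constant `C_φ` of an MPNN model:
`C_{φ₀} = 0`, `C_{φ_{t+1}} = ‖φ_t‖_L · (‖h^{(t)}‖_∞ + C_{φ_t})`. -/
def Cphi (m : MPNNModel) : ℕ → ℝ
  | 0 => 0
  | (t+1) => lipConstOn (m.φ t) (aggSet m t) * (supNorm m t + Cphi m t)

/-- The Lipschitz constant `C_{(φ,ψ)} = ‖ψ‖_L · (‖h^{(L)}‖_∞ + C_φ)`. -/
def Cpair (m : MPNNModel) (L : ℕ) {dout : ℕ}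
    (ψ : EuclideanSpace ℝ (Fin (m.d L)) → EuclideanSpace ℝ (Fin dout)) : ℝ :=
  lipConstOn ψ (probAgg m L) * (supNorm m L + Cphi m L)


open BoundedContinuousFunction in
lemma exists_tents (X : Type) [TopologicalSpace X] [SecondCountableTopology X]
    [TopologicalSpace.PseudoMetrizableSpace X] :
    ∃ e : ℕ → (X →ᵇ ℝ), ∀ f : X →ᵇ ℝ, (∀ x, 0 ≤ f x) → ∀ x, ∀ c : ℝ, 0 ≤ c → c < f x →
      ∃ j, (∀ y, e j y ≤ f y) ∧ c < e j x := by
  let := TopologicalSpace.pseudoMetrizableSpacePseudoMetric X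
  rcases isEmpty_or_nonempty X with hX | hX
  · exact ⟨fun _ => 0, fun f _ x => (hX.false x).elim⟩
  let e0 : ℕ × ℚ × ℕ → (X →ᵇ ℝ) := fun p =>
    BoundedContinuousFunction.ofNormedAddCommGroup
      (fun x => (p.2.1 : ℝ) * max 0 (1 - p.2.2 * dist x (TopologicalSpace.denseSeq X p.1)))
      (by fun_prop) |(p.2.1 : ℝ)| (by
        intro x
        rw [norm_mul, Real.norm_eq_abs]
        have h1 : ‖max 0 (1 - (p.2.2:ℝ) * dist x (TopologicalSpace.denseSeq X p.1))‖ ≤ 1 := by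
          rw [Real.norm_eq_abs, abs_of_nonneg (le_max_left _ _)]
          refine max_le zero_le_one ?_
          have : 0 ≤ (p.2.2:ℝ) * dist x (TopologicalSpace.denseSeq X p.1) := by positivity
          linarith
        calc _ ≤ |(p.2.1 : ℝ)| * 1 := by gcongr
          _ = _ := mul_one _)
  obtain ⟨s, hs⟩ := exists_surjective_nat (ℕ × ℚ × ℕ)
  refine ⟨fun n => e0 (s n), fun f hf x c hc hcf => ?_⟩
  obtain ⟨q, hq1, hq2⟩ := exists_rat_btwn hcf
  have hopen : IsOpen {y | (q:ℝ) < f y} := isOpen_lt continuous_const f.continuous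
  obtain ⟨r, hr, hball⟩ := Metric.isOpen_iff.1 hopen x hq2
  obtain ⟨n, hn⟩ := exists_nat_gt (2 / r)
  have hn0 : (0:ℝ) < n := lt_trans (by positivity) hn
  have hq0 : (0:ℝ) < q := lt_of_le_of_lt hc hq1
  have hopen2 : IsOpen {y | c < (q:ℝ) * (1 - n * dist x y)} :=
    isOpen_lt continuous_const (by fun_prop)
  have hopen3 : IsOpen {y | dist x y < r / 2} :=
    isOpen_lt (by fun_prop) continuous_const
  obtain ⟨k, hk⟩ := (TopologicalSpace.denseRange_denseSeq X).exists_mem_open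
    (hopen2.inter hopen3) ⟨x, by simpa using hq1, by simpa using hr⟩
  obtain ⟨j, hj⟩ := hs (k, q, n)
  refine ⟨j, ?_, ?_⟩
  · intro y
    simp only [hj, e0, BoundedContinuousFunction.coe_ofNormedAddCommGroup]
    set z := TopologicalSpace.denseSeq X k
    by_cases h : 1 - n * dist y z ≤ 0
    · rw [max_eq_left h]; simpa using hf y
    · push Not at h
      have h1 : dist y z < r / 2 := by
        have h3 : n * dist y z < 1 := by linarith
        have h4 : 2 < n * r := by rwa [div_lt_iff₀ hr] at hn
        by_contra h5
        push Not at h5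
        nlinarith
      have h2 : (q:ℝ) < f y := hball (by
        rw [Metric.mem_ball]
        have h6 : dist x z < r / 2 := hk.2
        have := dist_triangle_right y x z
        linarith)
      have h7 : max 0 (1 - n * dist y z) ≤ 1 := by
        refine max_le zero_le_one ?_
        have : 0 ≤ (n:ℝ) * dist y z := by positivity
        linarith
      nlinarith
  · simp only [hj, e0, BoundedContinuousFunction.coe_ofNormedAddCommGroup]
    refine lt_of_lt_of_le hk.1 ?_
    gcongr
    exact le_max_right _ _

open BoundedContinuousFunction in
def listSup {X : Type} [TopologicalSpace X] (e : ℕ → (X →ᵇ ℝ)) : List ℕ → (X →ᵇ ℝ)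
  | [] => 0
  | i :: l => e i ⊔ listSup e l

open BoundedContinuousFunction in
lemma exists_seq_list {X : Type} [TopologicalSpace X] (e : ℕ → (X →ᵇ ℝ))
    (he : ∀ f : X →ᵇ ℝ, (∀ x, 0 ≤ f x) → ∀ x, ∀ c : ℝ, 0 ≤ c → c < f x →
      ∃ j, (∀ y, e j y ≤ f y) ∧ c < e j x) (f : X →ᵇ ℝ) (hf : ∀ x, 0 ≤ f x) :
    ∃ L : ℕ → List ℕ, (∀ n x, listSup e (L n) x ≤ f x) ∧
      (∀ x, Monotone fun n => listSup e (L n) x) ∧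
      (∀ n x, 0 ≤ listSup e (L n) x) ∧
      ∀ x, Filter.Tendsto (fun n => listSup e (L n) x) Filter.atTop (nhds (f x)) := by
  classical
  let L : ℕ → List ℕ := fun n => Nat.rec [] (fun n l => if ∀ y, e n y ≤ f y then n :: l else l) n
  have hL : ∀ n, L (n+1) = if ∀ y, e n y ≤ f y then n :: L n else L n := fun n => rfl
  have hle : ∀ n x, listSup e (L n) x ≤ f x := by
    intro n x
    induction n with
    | zero => exact hf x
    | succ n ih =>
      rw [hL]
      split_ifs with h
      · exact max_le (h x) ih
      · exact ih
  have hmono : ∀ x, Monotone fun n => listSup e (L n) x := by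
    intro x
    refine monotone_nat_of_le_succ fun n => ?_
    show listSup e (L n) x ≤ listSup e (L (n+1)) x
    rw [hL]
    split_ifs with h
    · exact le_max_right _ _
    · exact le_rfl
  have hpos : ∀ n x, 0 ≤ listSup e (L n) x := fun n x => hmono x (Nat.zero_le n)
  refine ⟨L, hle, hmono, hpos, fun x => ?_⟩
  refine tendsto_atTop_isLUB (hmono x) ⟨?_, ?_⟩
  · rintro _ ⟨n, rfl⟩; exact hle n x
  · intro b hb
    by_contra hlt
    push Not at hlt
    have hb0 : 0 ≤ b := (hpos 0 x).trans (hb ⟨0, rfl⟩)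
    obtain ⟨j, hj, hj2⟩ := he f hf x b hb0 hlt
    have h1 : listSup e (L (j+1)) x ≤ b := hb ⟨j+1, rfl⟩
    rw [hL, if_pos hj] at h1
    exact absurd (le_trans (le_max_left _ _) h1) (not_le.2 hj2)

instance subProb_fin {X : Type} [MeasurableSpace X] (μ : SubProb X) : IsFiniteMeasure μ.1 :=
  ⟨lt_of_le_of_lt μ.2 ENNReal.one_lt_top⟩

open BoundedContinuousFunction in
lemma subProbWeakTop_countable (X : Type) [TopologicalSpace X] [SecondCountableTopology X]
    [TopologicalSpace.PseudoMetrizableSpace X] [MeasurableSpace X] [BorelSpace X] :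
    ∃ F : Option (List ℕ) → (X →ᵇ ℝ), subProbWeakTop X =
      TopologicalSpace.induced (fun (μ : SubProb X) i => ∫ x, F i x ∂μ.val) inferInstance := by
  obtain ⟨e, he⟩ := exists_tents X
  refine ⟨fun i => i.elim (BoundedContinuousFunction.const X 1) (listSup e), ?_⟩
  apply le_antisymm
  · rw [← continuous_iff_le_induced]
    let := subProbWeakTop X
    refine continuous_pi fun i => ?_
    exact continuous_iInf_dom continuous_induced_dom
  · set F : Option (List ℕ) → (X →ᵇ ℝ) :=
      fun i => i.elim (BoundedContinuousFunction.const X 1) (listSup e)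
    refine le_iInf fun f => ?_
    rw [← continuous_iff_le_induced]
    let : TopologicalSpace (SubProb X) :=
      TopologicalSpace.induced (fun (μ : SubProb X) i => ∫ x, F i x ∂μ.val) inferInstance
    have hF : ∀ i, Continuous (fun μ : SubProb X => ∫ x, F i x ∂μ.val) := by
      have h0 : Continuous (fun (μ : SubProb X) i => ∫ x, F i x ∂μ.val) := continuous_induced_dom
      exact fun i => (continuous_apply i).comp h0
    have hmass : Continuous (fun μ : SubProb X => ∫ x, (1:ℝ) ∂μ.val) := hF none
    have hlsc : ∀ g : X →ᵇ ℝ, (∀ x, 0 ≤ g x) →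
        LowerSemicontinuous (fun μ : SubProb X => ∫ x, g x ∂μ.val) := by
      intro g hg μ c hc
      obtain ⟨L, h1, h2, h3, h4⟩ := exists_seq_list e he g hg
      have hlim : Filter.Tendsto (fun n => ∫ x, listSup e (L n) x ∂μ.val) Filter.atTop
          (nhds (∫ x, g x ∂μ.val)) :=
        integral_tendsto_of_tendsto_of_monotone (fun n => (listSup e (L n)).integrable _)
          (g.integrable _) (Filter.Eventually.of_forall h2) (Filter.Eventually.of_forall h4)
      obtain ⟨n, hn⟩ := (hlim.eventually (lt_mem_nhds hc)).exists
      have := (hF (some (L n))).tendsto μ |>.eventually (lt_mem_nhds hn)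
      filter_upwards [this] with ν hν
      exact lt_of_lt_of_le hν (integral_mono ((listSup e (L n)).integrable _)
        (g.integrable _) (h1 n))
    rw [continuous_iff_lower_upperSemicontinuous]
    have hb : ∀ x, |f x| ≤ ‖f‖ := f.norm_coe_le_norm
    constructor
    · have h := (hlsc (BoundedContinuousFunction.const X ‖f‖ + f) (fun x => by
        have := (abs_le.1 (hb x)).1
        simp; linarith)).add (hmass.const_mul (-‖f‖)).lowerSemicontinuous
      refine cast ?_ h
      congr 1
      ext μ
      simp only [BoundedContinuousFunction.coe_add, Pi.add_apply,
        BoundedContinuousFunction.const_apply]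
      rw [integral_add (integrable_const _) (f.integrable _)]
      simp; ring
    · have h := (hlsc (BoundedContinuousFunction.const X ‖f‖ - f) (fun x => by
        have := (abs_le.1 (hb x)).2
        simp; linarith)).add (hmass.const_mul (-‖f‖)).lowerSemicontinuous
      have h' := continuous_neg.comp_lowerSemicontinuous_antitone h (fun a b hab => neg_le_neg hab)
      refine cast ?_ h'
      congr 1
      ext μ
      simp only [BoundedContinuousFunction.coe_sub, Pi.sub_apply,
        BoundedContinuousFunction.const_apply, Function.comp]
      rw [integral_sub (integrable_const _) (f.integrable _)]
      simp; ring

lemma M_nice : ∀ h, SecondCountableTopology (M h) ∧ TopologicalSpace.PseudoMetrizableSpace (M h)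
  | 0 => by
    change SecondCountableTopology Unit ∧ TopologicalSpace.PseudoMetrizableSpace Unit
    exact ⟨inferInstance, inferInstance⟩
  | (h+1) => by
    obtain ⟨h1, h2⟩ := M_nice h
    obtain ⟨F, hF⟩ := subProbWeakTop_countable (M h)
    have hind : Topology.IsInducing
        (fun (α : M (h+1)) (i : Option (List ℕ)) => ∫ x, F i x ∂(toMeas α)) := ⟨hF⟩
    exact ⟨hind.secondCountableTopology, hind.pseudoMetrizableSpace⟩

instance (h : ℕ) : SecondCountableTopology (M h) := (M_nice h).1
instance (h : ℕ) : TopologicalSpace.PseudoMetrizableSpace (M h) := (M_nice h).2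

instance toMeas_fin {h : ℕ} (α : M (h+1)) : IsFiniteMeasure (toMeas α) :=
  subProb_fin (toSub α)

lemma toMeas_le {h : ℕ} (α : M (h+1)) : toMeas α univ ≤ 1 := (toSub α).2

lemma continuous_integral_M {h : ℕ} (f : BoundedContinuousFunction (M h) ℝ) :
    Continuous (fun α : M (h+1) => ∫ x, f x ∂(toMeas α)) :=
  continuous_iInf_dom (t₁ := fun f : BoundedContinuousFunction (M h) ℝ =>
    TopologicalSpace.induced (fun μ : SubProb (M h) => ∫ x, f x ∂μ.val) inferInstance)
    (i := f) continuous_induced_dom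

lemma continuous_to_M {Y : Type*} [TopologicalSpace Y] {h : ℕ} (g : Y → M (h+1))
    (hg : ∀ f : BoundedContinuousFunction (M h) ℝ,
      Continuous (fun y => ∫ x, f x ∂(toMeas (g y)))) : Continuous g := by
  refine continuous_iInf_rng.2 fun f => ?_
  exact continuous_induced_rng.2 (hg f)

lemma measurable_to_M {Y : Type*} [MeasurableSpace Y] {h : ℕ} (g : Y → M (h+1))
    (hg : ∀ f : BoundedContinuousFunction (M h) ℝ,
      Measurable (fun y => ∫ x, f x ∂(toMeas (g y)))) : Measurable g := by
  obtain ⟨F, hF⟩ := subProbWeakTop_countable (M h)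
  have hind : Topology.IsInducing
      (fun (α : M (h+1)) (i : Option (List ℕ)) => ∫ x, F i x ∂(toMeas α)) := ⟨hF⟩
  have hb : (inferInstance : MeasurableSpace (M (h+1))) = MeasurableSpace.comap
      (fun (α : M (h+1)) (i : Option (List ℕ)) => ∫ x, F i x ∂(toMeas α)) inferInstance := by
    have : (inferInstance : MeasurableSpace (M (h+1))) = borel (M (h+1)) := rfl
    rw [this, hind.eq_induced, borel_comap]
    congr 1
    exact (BorelSpace.measurable_eq (α := Option (List ℕ) → ℝ)).symm
  have : @Measurable _ _ _ (MeasurableSpace.comap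
      (fun (α : M (h+1)) (i : Option (List ℕ)) => ∫ x, F i x ∂(toMeas α)) inferInstance) g := by
    refine measurable_comap_iff.2 ?_
    exact measurable_pi_lambda _ fun i => hg (F i)
  rw [← hb] at this
  exact this

lemma continuous_projM : ∀ h, Continuous (projM h)
  | 0 => by
    have : projM 0 = fun _ => (() : M 0) := rfl
    rw [this]; exact continuous_const
  | (h+1) => by
    refine continuous_to_M _ fun f => ?_
    have hc := continuous_projM h
    have : (fun y => ∫ x, f x ∂(toMeas (projM (h+1) y))) =
        fun y => ∫ x, (f.compContinuous ⟨projM h, hc⟩) x ∂(toMeas y) := by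
      ext y
      change ∫ x, f x ∂((toMeas y).map (projM h)) = _
      rw [integral_map hc.measurable.aemeasurable f.continuous.aestronglyMeasurable]
      rfl
    rw [this]
    exact continuous_integral_M _

lemma toMeas_wlMap (W : Graphon) (h : ℕ) (x : ℝ) : toMeas (wlMap W (h+1) x) =
    Measure.map (wlMap W h) ((volume.restrict (Set.Icc (0:ℝ) 1)).withDensity fun y =>
        ENNReal.ofReal (W.W x y)) := rfl

lemma graphon_meas (W : Graphon) (x : ℝ) : Measurable (W.W x) :=
  W.meas.comp (measurable_const.prodMk measurable_id)

lemma integral_wlMap {E : Type*} [NormedAddCommGroup E] [NormedSpace ℝ E]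
    [SecondCountableTopology E]
    (W : Graphon) (h : ℕ) (hm : Measurable (wlMap W h)) (f : M h → E) (hf : Continuous f)
    (x : ℝ) : ∫ β, f β ∂(toMeas (wlMap W (h+1) x)) =
      ∫ y in Set.Icc (0:ℝ) 1, W.W x y • f (wlMap W h y) := by
  rw [toMeas_wlMap, integral_map hm.aemeasurable hf.aestronglyMeasurable]
  rw [integral_withDensity_eq_integral_toReal_smul (graphon_meas W x).ennreal_ofReal
    (Filter.Eventually.of_forall fun _ => ENNReal.ofReal_lt_top)]
  simp only [ENNReal.toReal_ofReal (W.mem _ _).1]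

lemma measurable_wlMap (W : Graphon) : ∀ h, Measurable (wlMap W h)
  | 0 => by
    have : wlMap W 0 = fun _ => (() : M 0) := rfl
    rw [this]; exact measurable_const
  | (h+1) => by
    have ih := measurable_wlMap W h
    refine measurable_to_M _ fun f => ?_
    simp only [integral_wlMap W h ih f f.continuous]
    have : StronglyMeasurable (Function.uncurry fun x y => W.W x y • f (wlMap W h y)) := by
      apply Measurable.stronglyMeasurable
      exact W.meas.smul ((f.continuous.measurable.comp ih).comp measurable_snd)
    exact this.integral_prod_right.measurable

lemma wlMap_consistent (W : Graphon) : ∀ h x, projM h (wlMap W (h+1) x) = wlMap W h x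
  | 0, x => rfl
  | (h+1), x => by
    apply Subtype.ext
    change Measure.map (projM h) (Measure.map (wlMap W (h+1)) _) = Measure.map (wlMap W h) _
    rw [Measure.map_map (continuous_projM h).measurable (measurable_wlMap W (h+1))]
    congr 1
    ext y
    exact wlMap_consistent W h y

lemma iWinf_val (W : Graphon) (x : ℝ) (h : ℕ) : (iWinf W x).1 h = wlMap W h x := by
  unfold iWinf
  rw [dif_pos (fun h' => wlMap_consistent W h' x)]

lemma measurable_iWinf (W : Graphon) : Measurable (iWinf W) := by
  have h1 : (inferInstance : MeasurableSpace Minf) = MeasurableSpace.comap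
      (Subtype.val : Minf → (h : ℕ) → M h) MeasurableSpace.pi := by
    have : (inferInstance : MeasurableSpace Minf) = borel Minf := rfl
    rw [this, BorelSpace.measurable_eq (α := (h : ℕ) → M h), borel_comap]
  have : @Measurable _ _ _ (MeasurableSpace.comap
      (Subtype.val : Minf → (h : ℕ) → M h) MeasurableSpace.pi) (iWinf W) := by
    refine measurable_comap_iff.2 (measurable_pi_lambda _ fun h => ?_)
    have : (fun x => (Subtype.val ∘ iWinf W) x h) = wlMap W h := by
      ext x; exact iWinf_val W x h
    rw [this]
    exact measurable_wlMap W h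
  rw [← h1] at this
  exact this

lemma prokhorov_bdd {X : Type*} [MeasurableSpace X] (d : X → X → ℝ) (μ ν : Measure X) :
    BddBelow {ε : ℝ | 0 < ε ∧ ∀ A : Set X, MeasurableSet A →
    μ A ≤ ν (thicken d ε A) + ENNReal.ofReal ε ∧
    ν A ≤ μ (thicken d ε A) + ENNReal.ofReal ε} := ⟨0, fun _ h => h.1.le⟩

lemma prokhorov_nonneg {X : Type*} [MeasurableSpace X] (d : X → X → ℝ) (μ ν : Measure X) :
    0 ≤ prokhorovDist d μ ν := Real.sInf_nonneg fun _ h => h.1.le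

lemma prokhorov_one_mem {X : Type*} [MeasurableSpace X] (d : X → X → ℝ) (μ ν : Measure X)
    (hμ : μ univ ≤ 1) (hν : ν univ ≤ 1) : (1:ℝ) ∈ {ε : ℝ | 0 < ε ∧ ∀ A : Set X, MeasurableSet A →
    μ A ≤ ν (thicken d ε A) + ENNReal.ofReal ε ∧
    ν A ≤ μ (thicken d ε A) + ENNReal.ofReal ε} := by
  refine ⟨one_pos, fun A _ => ⟨?_, ?_⟩⟩
  · rw [ENNReal.ofReal_one]
    exact (measure_mono (subset_univ A)).trans (hμ.trans le_add_self)
  · rw [ENNReal.ofReal_one]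
    exact (measure_mono (subset_univ A)).trans (hν.trans le_add_self)

lemma Pdist_nonneg : ∀ h (α β : M h), 0 ≤ Pdist h α β
  | 0, _, _ => le_rfl
  | (_+1), _, _ => prokhorov_nonneg _ _ _

lemma Pdist_le_one : ∀ h (α β : M h), Pdist h α β ≤ 1
  | 0, _, _ => zero_le_one
  | (_+1), α, β => csInf_le (prokhorov_bdd _ _ _) (prokhorov_one_mem _ _ _ (toMeas_le α)
      (toMeas_le β))

lemma Pdist_proj : ∀ h (α β : M (h+1)), Pdist h (projM h α) (projM h β) ≤ Pdist (h+1) α β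
  | 0, _, _ => Pdist_nonneg _ _ _
  | (h+1), α, β => by
    refine csInf_le_csInf (prokhorov_bdd _ _ _)
      ⟨1, prokhorov_one_mem _ _ _ (toMeas_le α) (toMeas_le β)⟩ ?_
    rintro ε ⟨hε, H⟩
    have hm := (continuous_projM h).measurable
    have key : ∀ (μ ν : Measure (M (h+1))) (A : Set (M h)), MeasurableSet A →
        μ (projM h ⁻¹' A) ≤ ν (thicken (Pdist (h+1)) ε (projM h ⁻¹' A)) + ENNReal.ofReal ε →
        μ.map (projM h) A ≤ ν.map (projM h) (thicken (Pdist h) ε A) + ENNReal.ofReal ε := by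
      intro μ ν A hA hle
      rw [Measure.map_apply hm hA]
      refine hle.trans ?_
      gcongr
      refine le_trans (measure_mono ?_) (Measure.le_map_apply hm.aemeasurable _)
      rintro y ⟨x, hx, hxy⟩
      exact ⟨projM h x, hx, lt_of_le_of_lt (Pdist_proj h x y) hxy⟩
    refine ⟨hε, fun A hA => ?_⟩
    exact ⟨key _ _ A hA (H _ (hm hA)).1, key _ _ A hA (H _ (hm hA)).2⟩

lemma Pdist_mono (α β : Minf) {h H : ℕ} (hH : h ≤ H) :
    Pdist h (α.1 h) (β.1 h) ≤ Pdist H (α.1 H) (β.1 H) := by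
  induction H, hH using Nat.le_induction with
  | base => exact le_rfl
  | succ H _ ih =>
    refine ih.trans ?_
    have := Pdist_proj H (α.1 (H+1)) (β.1 (H+1))
    rwa [α.2 H, β.2 H] at this

lemma dPinf_le (α β : Minf) (H : ℕ) (r : ℝ) (h1 : Pdist H (α.1 H) (β.1 H) ≤ r)
    (h2 : 1 / ((H:ℝ) + 1) ≤ r) : dPinf α β ≤ r := by
  have hr : 0 ≤ r := le_trans (by positivity) h2
  refine ciSup_le fun h => ?_
  rcases le_or_gt h H with hh | hh
  · rcases Nat.eq_zero_or_pos h with rfl | hp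
    · simpa using hr
    · have hp' : (1:ℝ) ≤ h := by exact_mod_cast hp
      have := Pdist_mono α β hh
      calc (h:ℝ)⁻¹ * Pdist h (α.1 h) (β.1 h) ≤ 1 * Pdist h (α.1 h) (β.1 h) := by
            gcongr
            · exact Pdist_nonneg _ _ _
            · exact inv_le_one_of_one_le₀ hp'
        _ ≤ r := by linarith
  · have hp' : (H:ℝ) + 1 ≤ h := by exact_mod_cast hh
    calc (h:ℝ)⁻¹ * Pdist h (α.1 h) (β.1 h) ≤ ((H:ℝ)+1)⁻¹ * 1 := by
          gcongr
          · exact Pdist_nonneg _ _ _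
          · exact Pdist_le_one _ _ _
      _ ≤ r := by simpa using h2

def bump {E : Type} [PseudoMetricSpace E] (r : NNReal) (c : ℕ → E) (i : ℕ) (z : E) : ℝ :=
  min 1 (max 0 (2 - r * dist z (c i)))

def bumpMax {E : Type} [PseudoMetricSpace E] (r : NNReal) (c : ℕ → E) : ℕ → E → ℝ
  | 0, _ => 0
  | (i+1), z => max (bumpMax r c i z) (bump r c i z)

lemma bump_lip {E : Type} [PseudoMetricSpace E] (r : NNReal) (c : ℕ → E) (i : ℕ) :
    LipschitzWith r (bump r c i) := by
  refine LipschitzWith.const_min (LipschitzWith.const_max ?_ _) _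
  refine LipschitzWith.of_dist_le_mul fun x y => ?_
  rw [Real.dist_eq]
  have : (2 - r * dist x (c i)) - (2 - r * dist y (c i)) =
    -(r * (dist x (c i) - dist y (c i))) := by ring
  rw [this, abs_neg, abs_mul, abs_of_nonneg r.coe_nonneg]
  gcongr
  exact abs_dist_sub_le x y (c i)

lemma bumpMax_lip {E : Type} [PseudoMetricSpace E] (r : NNReal) (c : ℕ → E) :
    ∀ i, LipschitzWith r (bumpMax r c i)
  | 0 => (LipschitzWith.const (0:ℝ)).weaken zero_le
  | (i+1) => by
    have := (bumpMax_lip r c i).max (bump_lip r c i)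
    rwa [max_self] at this

lemma bumpMax_nonneg {E : Type} [PseudoMetricSpace E] (r : NNReal) (c : ℕ → E) (z : E) :
    ∀ i, 0 ≤ bumpMax r c i z
  | 0 => le_rfl
  | (i+1) => (bumpMax_nonneg r c z i).trans (le_max_left _ _)

lemma bumpMax_le_one {E : Type} [PseudoMetricSpace E] (r : NNReal) (c : ℕ → E) (z : E) :
    ∀ i, bumpMax r c i z ≤ 1
  | 0 => zero_le_one
  | (i+1) => max_le (bumpMax_le_one r c z i) (min_le_left _ _)

lemma bump_le_bumpMax {E : Type} [PseudoMetricSpace E] (r : NNReal) (c : ℕ → E) (z : E)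
    (i : ℕ) : ∀ k, i < k → bump r c i z ≤ bumpMax r c k z
  | 0, h => absurd h (Nat.not_lt_zero _)
  | (k+1), h => by
    rcases Nat.lt_succ_iff_lt_or_eq.1 h with h | h
    · exact (bump_le_bumpMax r c z i k h).trans (le_max_left _ _)
    · rw [h]; exact le_max_right _ _

lemma exists_partition (d : ℕ) (δ : ℝ) (hδ : 0 < δ) :
    ∃ (k : ℕ) (G : EuclideanSpace ℝ (Fin d) → EuclideanSpace ℝ (Fin k)),
      (∃ K : NNReal, LipschitzWith K G) ∧
      (∀ z i, 0 ≤ G z i) ∧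
      (∀ z, ‖z‖ ≤ 1 → ∑ i, G z i = 1) ∧
      (∀ z z' i, 0 < G z i → 0 < G z' i → ‖z - z'‖ ≤ δ) := by
  obtain ⟨t, -, htf, hcov⟩ := finite_cover_balls_of_compact
    (isCompact_closedBall (0 : EuclideanSpace ℝ (Fin d)) 1) (e := δ / 4) (by positivity)
  let l := htf.toFinset.toList
  let c : ℕ → EuclideanSpace ℝ (Fin d) := fun i => l.getD i 0
  let r : NNReal := Real.toNNReal (4 / δ)
  have hr : (r : ℝ) = 4 / δ := Real.coe_toNNReal _ (by positivity)
  let g : ℕ → EuclideanSpace ℝ (Fin d) → ℝ := fun i z => bumpMax r c (i+1) z - bumpMax r c i z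
  refine ⟨l.length, fun z => WithLp.toLp 2 fun i => g i z, ?_, ?_, ?_, ?_⟩
  · have h1 : LipschitzWith (r + r) fun z => fun i : Fin l.length => g i z := by
      refine LipschitzWith.of_dist_le_mul fun x y => ?_
      refine (dist_pi_le_iff (by positivity)).2 fun i => ?_
      have a1 := (bumpMax_lip r c (i+1)).dist_le_mul x y
      have a2 := (bumpMax_lip r c i).dist_le_mul x y
      push_cast
      rw [add_mul]
      exact (dist_sub_sub_le _ _ _ _).trans (add_le_add a1 a2)
    exact ⟨_, (PiLp.lipschitzWith_toLp 2 _).comp h1⟩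
  · intro z i
    exact sub_nonneg.2 (le_max_left _ _)
  · intro z hz
    change ∑ i : Fin l.length, g i z = 1
    rw [Fin.sum_univ_eq_sum_range (fun i => g i z) l.length,
      Finset.sum_range_sub (fun i => bumpMax r c i z)]
    change bumpMax r c l.length z - 0 = 1
    rw [sub_zero]
    refine le_antisymm (bumpMax_le_one _ _ _ _) ?_
    have hz' : z ∈ Metric.closedBall (0 : EuclideanSpace ℝ (Fin d)) 1 := by simpa using hz
    obtain ⟨x, hx, hzx⟩ := mem_iUnion₂.1 (hcov hz')
    have hxl : x ∈ l := by simpa [l] using hx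
    obtain ⟨i, hi, hix⟩ := List.mem_iff_getElem.1 hxl
    refine le_trans ?_ (bump_le_bumpMax r c z i _ hi)
    have hc : c i = x := by simp only [c]; rw [List.getD_eq_getElem _ _ hi, hix]
    unfold bump
    rw [hc, hr]
    refine le_min le_rfl (le_max_of_le_right ?_)
    have h1 : dist z x < δ / 4 := hzx
    have : 4 / δ * dist z x ≤ 4 / δ * (δ / 4) := by gcongr
    have h2 : 4 / δ * (δ / 4) = 1 := by field_simp
    linarith
  · intro z z' i h1 h2
    have key : ∀ w, 0 < g i w → dist w (c i) ≤ δ / 2 := by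
      intro w hw
      by_contra hlt
      push Not at hlt
      have hb : bump r c i w ≤ 0 := by
        unfold bump
        refine min_le_of_right_le (max_le le_rfl ?_)
        rw [hr]
        have : 4 / δ * (δ / 2) ≤ 4 / δ * dist w (c i) := by gcongr
        have h2 : 4 / δ * (δ / 2) = 2 := by field_simp; norm_num
        linarith
      have : bumpMax r c (i+1) w = bumpMax r c i w :=
        max_eq_left (hb.trans (bumpMax_nonneg _ _ _ _))
      have h0 : g i w = 0 := by simp only [g]; rw [this, sub_self]
      linarith
    have := dist_triangle_right z z' (c i)
    rw [← dist_eq_norm]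
    linarith [key z h1, key z' h2]

lemma prok_half {X : Type*} [MeasurableSpace X] (d : X → X → ℝ) (μ ν : Measure X)
    [IsFiniteMeasure μ] [IsFiniteMeasure ν] {k : ℕ} (f : X → Fin k → ℝ)
    (hmeas : ∀ i, Measurable fun x => f x i) (hnn : ∀ x i, 0 ≤ f x i) (hsum : ∀ x, ∑ i, f x i = 1)
    (ε e : ℝ) (hε : 0 < ε) (hshare : ∀ i x y, 0 < f x i → 0 < f y i → d x y < ε)
    (he : ∀ i, |∫ x, f x i ∂μ - ∫ x, f x i ∂ν| ≤ e) (he0 : 0 ≤ e) (hke : k * e ≤ ε)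
    (A : Set X) (hA : MeasurableSet A) : μ A ≤ ν (thicken d ε A) + ENNReal.ofReal ε := by
  classical
  let S : Finset (Fin k) := Finset.univ.filter fun i => ∃ x ∈ A, 0 < f x i
  let F : X → ℝ := fun x => ∑ i ∈ S, f x i
  have hFm : Measurable F := Finset.measurable_sum _ fun i _ => hmeas i
  have hF0 : ∀ x, 0 ≤ F x := fun x => Finset.sum_nonneg fun i _ => hnn x i
  have hF1 : ∀ x, F x ≤ 1 := fun x => by
    rw [← hsum x]
    exact Finset.sum_le_sum_of_subset_of_nonneg (Finset.subset_univ _) fun i _ _ => hnn x i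
  have hFA : ∀ x ∈ A, F x = 1 := fun x hx => by
    rw [← hsum x]
    refine Finset.sum_subset (Finset.subset_univ _) fun i _ hi => ?_
    by_contra h0
    exact hi (Finset.mem_filter.2 ⟨Finset.mem_univ _, x, hx,
      lt_of_le_of_ne (hnn x i) (Ne.symm h0)⟩)
  have hint : ∀ (ρ : Measure X) [IsFiniteMeasure ρ], Integrable F ρ := fun ρ _ =>
    Integrable.of_bound hFm.aestronglyMeasurable 1 (Filter.Eventually.of_forall fun x => by
      rw [Real.norm_eq_abs, abs_of_nonneg (hF0 x)]; exact hF1 x)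
  have hf1 : ∀ x i, f x i ≤ 1 := fun x i => by
    rw [← hsum x]
    exact Finset.single_le_sum (fun i _ => hnn x i) (Finset.mem_univ i)
  have hinti : ∀ (ρ : Measure X) [IsFiniteMeasure ρ] i, Integrable (fun x => f x i) ρ :=
    fun ρ _ i =>
    Integrable.of_bound (hmeas i).aestronglyMeasurable 1 (Filter.Eventually.of_forall fun x => by
      rw [Real.norm_eq_abs, abs_of_nonneg (hnn x i)]; exact hf1 x i)
  let B : Set X := {y | 0 < F y}
  have hB : MeasurableSet B := measurableSet_lt measurable_const hFm
  have hBA : B ⊆ thicken d ε A := by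
    intro y hy
    obtain ⟨i, hi, hiy⟩ := Finset.exists_lt_of_sum_lt (s := S) (f := fun _ => (0:ℝ))
      (g := fun i => f y i) (by rw [Finset.sum_const_zero]; exact hy)
    obtain ⟨-, x, hx, hxi⟩ := Finset.mem_filter.1 hi
    exact ⟨x, hx, hshare i x y hxi hiy⟩
  have h1 : μ.real A ≤ ∫ x, F x ∂μ := by
    rw [← integral_indicator_one hA]
    refine integral_mono ((integrable_const (1:ℝ)).indicator hA) (hint μ) fun x => ?_
    by_cases hx : x ∈ A
    · simp [hx, hFA x hx]
    · simpa [hx] using hF0 x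
  have h2 : ∫ x, F x ∂ν ≤ ν.real B := by
    rw [← integral_indicator_one hB]
    refine integral_mono (hint ν) ((integrable_const (1:ℝ)).indicator hB) fun x => ?_
    by_cases hx : x ∈ B
    · simpa [hx] using hF1 x
    · have : F x ≤ 0 := not_lt.1 hx
      simpa [hx] using this
  have h3 : ∫ x, F x ∂μ ≤ ∫ x, F x ∂ν + ε := by
    simp only [F]
    rw [integral_finsetSum _ fun i _ => hinti μ i, integral_finsetSum _ fun i _ => hinti ν i]
    have : ∑ i ∈ S, ∫ x, f x i ∂μ ≤ ∑ i ∈ S, (∫ x, f x i ∂ν + e) :=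
      Finset.sum_le_sum fun i _ => by linarith [(abs_le.1 (he i)).2]
    rw [Finset.sum_add_distrib, Finset.sum_const, nsmul_eq_mul] at this
    have hc : (S.card : ℝ) ≤ k := by
      have := Finset.card_le_univ S
      rw [Fintype.card_fin] at this
      exact_mod_cast this
    nlinarith
  calc μ A = ENNReal.ofReal (μ.real A) := (ofReal_measureReal).symm
    _ ≤ ENNReal.ofReal (ν.real B + ε) := ENNReal.ofReal_le_ofReal (by linarith)
    _ = ν B + ENNReal.ofReal ε := by
      rw [ENNReal.ofReal_add measureReal_nonneg hε.le, ofReal_measureReal]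
    _ ≤ _ := by gcongr

lemma prok_le {X : Type*} [MeasurableSpace X] (d : X → X → ℝ) (μ ν : Measure X)
    [IsFiniteMeasure μ] [IsFiniteMeasure ν] {k : ℕ} (f : X → Fin k → ℝ)
    (hmeas : ∀ i, Measurable fun x => f x i) (hnn : ∀ x i, 0 ≤ f x i) (hsum : ∀ x, ∑ i, f x i = 1)
    (ε e : ℝ) (hε : 0 < ε) (hshare : ∀ i x y, 0 < f x i → 0 < f y i → d x y < ε)
    (he : ∀ i, |∫ x, f x i ∂μ - ∫ x, f x i ∂ν| ≤ e) (he0 : 0 ≤ e) (hke : k * e ≤ ε) :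
    prokhorovDist d μ ν ≤ ε := by
  refine csInf_le (prokhorov_bdd _ _ _) ⟨hε, fun A hA => ⟨?_, ?_⟩⟩
  · exact prok_half d μ ν f hmeas hnn hsum ε e hε hshare he he0 hke A hA
  · exact prok_half d ν μ f hmeas hnn hsum ε e hε hshare
      (fun i => by rw [abs_sub_comm]; exact he i) he0 hke A hA

def mkModel (k : ℕ → ℕ)
    (G : ∀ d, EuclideanSpace ℝ (Fin d) → EuclideanSpace ℝ (Fin (k d)))
    (hG : ∀ d, Continuous (G d)) : MPNNModel where
  d := fun t => Nat.rec 1 (fun _ d => k d) t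
  φ₀ := WithLp.toLp 2 fun _ => 1
  φ := fun _ => G _
  cont := fun _ => hG _

lemma norm_le_one_of_sum {d : ℕ} (z : EuclideanSpace ℝ (Fin d)) (h0 : ∀ i, 0 ≤ z i)
    (h1 : ∑ i, z i = 1) : ‖z‖ ≤ 1 := by
  rw [EuclideanSpace.norm_eq]
  refine Real.sqrt_le_one.2 ?_
  rw [← h1]
  refine Finset.sum_le_sum fun i _ => ?_
  have : z i ≤ 1 := by
    rw [← h1]; exact Finset.single_le_sum (fun i _ => h0 i) (Finset.mem_univ i)
  rw [Real.norm_eq_abs, sq_abs]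
  nlinarith [h0 i]

lemma integral_coord {X : Type*} [MeasurableSpace X] (μ : Measure X) {d : ℕ}
    (f : X → EuclideanSpace ℝ (Fin d)) (hf : Integrable f μ) (i : Fin d) :
    (∫ x, f x ∂μ) i = ∫ x, f x i ∂μ :=
  ((EuclideanSpace.proj (𝕜 := ℝ) i).integral_comp_comm hf).symm

lemma feat_integrable {X : Type*} [MeasurableSpace X] (μ : Measure X) [IsFiniteMeasure μ] {d : ℕ}
    (f : X → EuclideanSpace ℝ (Fin d)) (hf : Measurable f)
    (hb : ∀ x, ‖f x‖ ≤ 1) : Integrable f μ :=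
  Integrable.of_bound hf.aestronglyMeasurable 1 (Filter.Eventually.of_forall hb)


lemma agg_norm {h d : ℕ} (f : M h → EuclideanSpace ℝ (Fin d)) (hb : ∀ x, ‖f x‖ ≤ 1)
    (α : M (h+1)) : ‖∫ β, f β ∂(toMeas α)‖ ≤ 1 := by
  refine (norm_integral_le_of_norm_le_const (Filter.Eventually.of_forall hb)).trans ?_
  rw [one_mul]
  exact ENNReal.toReal_le_of_le_ofReal zero_le_one (by simpa using toMeas_le α)

lemma feat_props
    (k : ℕ → ℕ) (G : ∀ d, EuclideanSpace ℝ (Fin d) → EuclideanSpace ℝ (Fin (k d)))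
    (hG : ∀ d, Continuous (G d)) (h0 : ∀ d z i, 0 ≤ G d z i)
    (h1 : ∀ d z, ‖z‖ ≤ 1 → ∑ i, G d z i = 1) : ∀ t, Continuous (idmFeat (mkModel k G hG) t) ∧
    (∀ α i, 0 ≤ idmFeat (mkModel k G hG) t α i) ∧
    (∀ α, ∑ i, idmFeat (mkModel k G hG) t α i = 1)
  | 0 => by
    refine ⟨?_, ?_, ?_⟩
    · exact continuous_const
    · intro α i; exact zero_le_one
    · intro α
      change ∑ i : Fin 1, (1:ℝ) = 1
      simp
  | (t+1) => by
    obtain ⟨hc, hn, hs⟩ := feat_props k G hG h0 h1 t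
    have hb : ∀ x, ‖idmFeat (mkModel k G hG) t x‖ ≤ 1 := fun x =>
      norm_le_one_of_sum _ (hn x) (hs x)
    have hagg : Continuous fun α : M (t+1) => ∫ β, idmFeat (mkModel k G hG) t β ∂(toMeas α) := by
      have : (fun α : M (t+1) => ∫ β, idmFeat (mkModel k G hG) t β ∂(toMeas α)) =
          fun α => WithLp.toLp 2 fun i => ∫ β, idmFeat (mkModel k G hG) t β i ∂(toMeas α) := by
        ext α i
        exact integral_coord _ _ (feat_integrable _ _ hc.measurable hb) i
      rw [this]
      refine (PiLp.continuous_toLp 2 _).comp (continuous_pi fun i => ?_)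
      have hci : Continuous fun β => idmFeat (mkModel k G hG) t β i :=
        (EuclideanSpace.proj (𝕜 := ℝ) i).continuous.comp hc
      exact continuous_integral_M (BoundedContinuousFunction.ofNormedAddCommGroup
        (fun β => idmFeat (mkModel k G hG) t β i) hci 1
        (fun β => (PiLp.norm_apply_le _ i).trans (hb β)))
    refine ⟨(hG _).comp hagg, ?_, ?_⟩
    · intro α i
      exact h0 _ _ i
    · intro α
      exact h1 _ _ (agg_norm _ hb α)

lemma feat_share
    (k : ℕ → ℕ) (G : ∀ d, EuclideanSpace ℝ (Fin d) → EuclideanSpace ℝ (Fin (k d)))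
    (hG : ∀ d, Continuous (G d)) (h0 : ∀ d z i, 0 ≤ G d z i)
    (h1 : ∀ d z, ‖z‖ ≤ 1 → ∑ i, G d z i = 1) (e : ℝ) (he : 0 < e)
    (h2 : ∀ d z z' i, 0 < G d z i → 0 < G d z' i → ‖z - z'‖ ≤ e / (d+1)) :
    ∀ t (α β : M t) i, 0 < idmFeat (mkModel k G hG) t α i →
      0 < idmFeat (mkModel k G hG) t β i → Pdist t α β ≤ e * t
  | 0, α, β, i, _, _ => by simp [Pdist]
  | (t+1), α, β, i, ha, hb => by
    obtain ⟨hc, hn, hs⟩ := feat_props k G hG h0 h1 t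
    have hbd : ∀ x, ‖idmFeat (mkModel k G hG) t x‖ ≤ 1 := fun x =>
      norm_le_one_of_sum _ (hn x) (hs x)
    have hclose := h2 _ _ _ i ha hb
    have hd : (0:ℝ) ≤ ((mkModel k G hG).d t : ℝ) := by positivity
    refine prok_le (Pdist t) (toMeas α) (toMeas β)
      (fun x i => idmFeat (mkModel k G hG) t x i) (fun i => ?_) hn hs _
      (e / ((mkModel k G hG).d t + 1)) (by positivity) (fun i x y hx hy => ?_) (fun i => ?_)
      (by positivity) ?_
    · exact ((EuclideanSpace.proj (𝕜 := ℝ) i).continuous.comp hc).measurable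
    · refine lt_of_le_of_lt (feat_share k G hG h0 h1 e he h2 t x y i hx hy) ?_
      push_cast
      nlinarith
    · rw [← integral_coord _ _ (feat_integrable _ _ hc.measurable hbd) i,
        ← integral_coord _ _ (feat_integrable _ _ hc.measurable hbd) i]
      exact (PiLp.norm_apply_le (_ - _ : EuclideanSpace ℝ (Fin ((mkModel k G hG).d t))) i).trans
        hclose
    · rw [mul_div_assoc', div_le_iff₀ (by positivity)]
      push_cast
      have : (0:ℝ) ≤ t := by positivity
      nlinarith [mul_nonneg he.le this, mul_nonneg (mul_nonneg he.le this) hd]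

lemma graphonFeat_eq
    (k : ℕ → ℕ) (G : ∀ d, EuclideanSpace ℝ (Fin d) → EuclideanSpace ℝ (Fin (k d)))
    (hG : ∀ d, Continuous (G d)) (h0 : ∀ d z i, 0 ≤ G d z i)
    (h1 : ∀ d z, ‖z‖ ≤ 1 → ∑ i, G d z i = 1) (W : Graphon) : ∀ t x, graphonFeat (mkModel k G hG) W.W t x =
    idmFeat (mkModel k G hG) t (wlMap W t x)
  | 0, x => rfl
  | (t+1), x => by
    obtain ⟨hc, hn, hs⟩ := feat_props k G hG h0 h1 t
    change (mkModel k G hG).φ t _ = (mkModel k G hG).φ t _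
    congr 1
    rw [integral_wlMap W t (measurable_wlMap W t) _ hc]
    simp only [graphonFeat_eq k G hG h0 h1 W t]

/-- For every `ε > 0` there are `L ∈ ℕ`, `C > 0` and `δ > 0` such that any two
graphons on which the outputs of all MPNN models with at most `L` layers, Lipschitz
readout into `ℝⁿ`, and Lipschitz constant `C_{(φ,ψ)} ≤ C` differ by at most `δ`
satisfy `δ_P(U,W) ≤ ε`. -/
theorem mpnn_close_implies_deltaP_close (n : ℕ) (hn : 0 < n) (ε : ℝ) (hε : 0 < ε) :
    ∃ (L : ℕ) (C δ : ℝ), 0 < C ∧ 0 < δ ∧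
      ∀ U W : Graphon,
        (∀ L' : ℕ, L' ≤ L → ∀ m : MPNNModel,
          (∀ t, t < L' → ∃ K : NNReal, LipschitzOnWith K (m.φ t) (aggSet m t)) →
          ∀ ψ : EuclideanSpace ℝ (Fin (m.d L')) → EuclideanSpace ℝ (Fin n),
            (∃ K : NNReal, LipschitzOnWith K ψ (probAgg m L')) →
            Cpair m L' ψ ≤ C →
            ‖ψ (∫ x in Set.Icc (0:ℝ) 1, graphonFeat m U.W L' x) -
                ψ (∫ x in Set.Icc (0:ℝ) 1, graphonFeat m W.W L' x)‖ ≤ δ) →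
        deltaP U W ≤ ε := by
  obtain ⟨H, hH⟩ := exists_nat_gt (2 / ε)
  have hH1 : 1 / ((H:ℝ) + 1) ≤ ε / 2 := by
    rw [div_lt_iff₀ hε] at hH
    rw [div_le_iff₀ (by positivity)]
    nlinarith
  set e : ℝ := ε / 2 / (H + 1) with he_def
  have he : 0 < e := by positivity
  have heH : e * H ≤ ε / 2 := by
    rw [he_def, div_mul_eq_mul_div, div_le_iff₀ (by positivity)]
    nlinarith
  choose k G hLip h0 h1 h2 using fun d : ℕ => exists_partition d (e / (d+1)) (by positivity)
  have hG : ∀ d, Continuous (G d) := fun d => (hLip d).choose_spec.continuous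
  set m := mkModel k G hG with hm
  obtain ⟨hc, hn0, hs⟩ := feat_props k G hG h0 h1 H
  have hbd : ∀ x, ‖idmFeat m H x‖ ≤ 1 := fun x => norm_le_one_of_sum _ (hn0 x) (hs x)
  let ψ : Fin (m.d H) → EuclideanSpace ℝ (Fin (m.d H)) → EuclideanSpace ℝ (Fin n) :=
    fun i z => EuclideanSpace.single ⟨0, hn⟩ (z i)
  have hψ : ∀ i z z', ‖ψ i z - ψ i z'‖ = |z i - z' i| := by
    intro i z z'
    have h3 : ψ i z - ψ i z' = EuclideanSpace.single ⟨0, hn⟩ (z i - z' i) := by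
      ext j
      simp only [ψ, PiLp.sub_apply, EuclideanSpace.single_apply]
      split_ifs <;> simp
    rw [h3, EuclideanSpace.norm_single, Real.norm_eq_abs]
  have hd0 : (0:ℝ) ≤ (m.d H : ℝ) := by positivity
  refine ⟨H, 1 + ∑ i, |Cpair m H (ψ i)|, ε / (m.d H + 1), by positivity, by positivity, ?_⟩
  intro U W hUW
  have hclose : ∀ i, |(∫ x in Set.Icc (0:ℝ) 1, graphonFeat m U.W H x) i -
      (∫ x in Set.Icc (0:ℝ) 1, graphonFeat m W.W H x) i| ≤ ε / (m.d H + 1) := by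
    intro i
    rw [← hψ]
    refine hUW H le_rfl m (fun t _ => ?_) (ψ i) ⟨1, ?_⟩ ?_
    · obtain ⟨K, hK⟩ := hLip (m.d t)
      exact ⟨K, hK.lipschitzOnWith⟩
    · refine (LipschitzWith.of_dist_le_mul fun z z' => ?_).lipschitzOnWith
      rw [dist_eq_norm, hψ, dist_eq_norm, NNReal.coe_one, one_mul]
      exact PiLp.norm_apply_le (z - z') i
    · have := Finset.single_le_sum (f := fun i => |Cpair m H (ψ i)|)
        (fun i _ => abs_nonneg _) (Finset.mem_univ i)
      have h3 := le_abs_self (Cpair m H (ψ i))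
      linarith
  have hproj : Continuous fun α : Minf => α.1 H := (continuous_apply H).comp continuous_subtype_val
  have hfc : ∀ i, Continuous fun α : Minf => idmFeat m H (α.1 H) i := fun i =>
    (EuclideanSpace.proj (𝕜 := ℝ) i).continuous.comp (hc.comp hproj)
  have hint : ∀ (V : Graphon) i, ∫ α, idmFeat m H (α.1 H) i ∂(nuW V) =
      (∫ x in Set.Icc (0:ℝ) 1, graphonFeat m V.W H x) i := by
    intro V i
    unfold nuW
    rw [integral_map (measurable_iWinf V).aemeasurable (hfc i).aestronglyMeasurable]
    have hgf : ∀ x, graphonFeat m V.W H x = idmFeat m H (wlMap V H x) :=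
      graphonFeat_eq k G hG h0 h1 V H
    simp only [iWinf_val, hgf]
    rw [integral_coord]
    exact feat_integrable _ _ (hc.measurable.comp (measurable_wlMap V H)) fun x => hbd _
  have hfin : ∀ V : Graphon, IsFiniteMeasure (nuW V) := fun V => by
    unfold nuW; infer_instance
  have := hfin U
  have := hfin W
  refine prok_le dPinf (nuW U) (nuW W) (fun α i => idmFeat m H (α.1 H) i)
    (fun i => (hfc i).measurable) (fun α => hn0 _) (fun α => hs _) ε (ε / (m.d H + 1)) hε
    (fun i α β ha hb => ?_) (fun i => ?_) (by positivity) ?_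
  · have h3 := feat_share k G hG h0 h1 e he h2 H (α.1 H) (β.1 H) i ha hb
    exact lt_of_le_of_lt (dPinf_le α β H (ε / 2) (h3.trans heH) hH1) (by linarith)
  · rw [hint, hint]
    exact hclose i
  · rw [mul_div_assoc', div_le_iff₀ (by positivity)]
    nlinarith

end
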